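/- Suppose D ⊆ ΔΘ is a Borel set, p ∈ I(μ0) has p(D) = 1, and f : ΔΘ → ℝ is bounded and measurable. Suppose every μ̄ ∈ D admits some μ ∈ ΔΘ and γ ∈ (0,1) with γμ ≤ μ0 such that ŵ(λμ + (1−λ)μ̄) > f(μ̄) for all sufficiently small λ ∈ (0,1]. Then ŵ(μ0) ≥ ∫ f dp. -/

import Mathlib

open MeasureTheory


/-- The Borel σ-algebra on the space of probability measures (the σ-algebra generated by
evaluation maps, i.e. the subspace σ-algebra of the Giry σ-algebra; for metrizable spaces
this is the Borel σ-algebra of the weak* topology). -/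
instance probMeasurableSpace {Ω : Type*} [MeasurableSpace Ω] :
    MeasurableSpace (ProbabilityMeasure Ω) :=
  MeasurableSpace.comap (fun μ => (μ : Measure Ω)) inferInstance

/-- Sender's expected utility from action `a` at belief `μ`. -/
noncomputable def senderEU {A Θ : Type*} [MeasurableSpace Θ]
    (uS : A → Θ → ℝ) (μ : ProbabilityMeasure Θ) (a : A) : ℝ :=
  ∫ θ, uS a θ ∂(μ : Measure Θ)

/-- The receiver's best responses `A*_R(μ)` at belief `μ`. -/
def bestResponses {A Θ : Type*} [MeasurableSpace Θ]
    (uR : A → Θ → ℝ) (μ : ProbabilityMeasure Θ) : Set A :=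
  {a | ∀ a' : A, ∫ θ, uR a' θ ∂(μ : Measure Θ) ≤ ∫ θ, uR a θ ∂(μ : Measure Θ)}

/-- The sender's upper value function `v`. -/
noncomputable def vFun {A Θ : Type*} [MeasurableSpace Θ]
    (uS uR : A → Θ → ℝ) (μ : ProbabilityMeasure Θ) : ℝ :=
  sSup (senderEU uS μ '' bestResponses uR μ)

/-- The sender's lower value function `w`. -/
noncomputable def wFun {A Θ : Type*} [MeasurableSpace Θ]
    (uS uR : A → Θ → ℝ) (μ : ProbabilityMeasure Θ) : ℝ :=
  sInf (senderEU uS μ '' bestResponses uR μ)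

/-- The set `I(μ0)` of information policies: distributions over posteriors with
barycenter equal to the prior `μ0`. -/
def infoPolicies {Θ : Type*} [MeasurableSpace Θ] (μ0 : ProbabilityMeasure Θ) :
    Set (ProbabilityMeasure (ProbabilityMeasure Θ)) :=
  {p | ∀ B : Set Θ, MeasurableSet B →
    ∫ ν, ((ν : Measure Θ) B).toReal ∂(p : Measure (ProbabilityMeasure Θ))
      = ((μ0 : Measure Θ) B).toReal}

/-- `v̂(μ0)`: the sender's best equilibrium (Bayesian persuasion) value. -/
noncomputable def vHat {A Θ : Type*} [MeasurableSpace Θ]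
    (uS uR : A → Θ → ℝ) (μ0 : ProbabilityMeasure Θ) : ℝ :=
  sSup ((fun p : ProbabilityMeasure (ProbabilityMeasure Θ) =>
    ∫ ν, vFun uS uR ν ∂(p : Measure (ProbabilityMeasure Θ))) '' infoPolicies μ0)

/-- `ŵ(μ0)`: the sender's worst equilibrium value. -/
noncomputable def wHat {A Θ : Type*} [MeasurableSpace Θ]
    (uS uR : A → Θ → ℝ) (μ0 : ProbabilityMeasure Θ) : ℝ :=
  sSup ((fun p : ProbabilityMeasure (ProbabilityMeasure Θ) =>
    ∫ ν, wFun uS uR ν ∂(p : Measure (ProbabilityMeasure Θ))) '' infoPolicies μ0)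

/-- `γμ ≤ mubar`: the measure `μ` scaled by `γ` is setwise below `mubar`. -/
def scaledLE {Θ : Type*} [MeasurableSpace Θ]
    (γ : ℝ) (μ mubar : ProbabilityMeasure Θ) : Prop :=
  ∀ E : Set Θ, MeasurableSet E →
    ENNReal.ofReal γ * (μ : Measure Θ) E ≤ (mubar : Measure Θ) E

/-!
Extend `ŵ`, shifted by a constant to be nonnegative, positively homogeneously from beliefs to finite
measures. The extension `V` is superlinear, and it is the least superadditive majorant of the
homogeneous extension of the lower semicontinuous function `w`. Addition of finite measures is an
open map, so passing to the least superadditive majorant preserves lower semicontinuity; hence `V`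
is lower semicontinuous, although `w` need not be continuous.

A lower semicontinuous superlinear functional satisfies Jensen's inequality
`∫ V(x) dq(x) ≤ V(barycenter of q)`. For small `λ`, the mixture `λμ + (1 - λ)x` is dominated by
`x + εμ0`, so `f(x) ≤ V(x + εμ0)` for `p`-almost every `x`. Jensen's inequality for
`x ↦ V(x + εμ0)` bounds `∫ f dp` by `V((1 + ε)μ0) = (1 + ε)V(μ0)`, and `ε` tends to `0`.
-/

open Filter Topology
open scoped NNReal ENNReal BoundedContinuousFunction

namespace BayesianPersuasion

section ContinuousDensity

variable {Ω : Type*} [TopologicalSpace Ω] [MeasurableSpace Ω]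

/-- The measure with density `k` with respect to the finite measure `m`. Requiring the density to
be bounded and continuous makes this operation weak*-continuous in `m`. -/
noncomputable def withContinuousDensity (k : Ω →ᵇ ℝ≥0) (m : FiniteMeasure Ω) : FiniteMeasure Ω :=
  ⟨(m : Measure Ω).withDensity fun x => k x,
    isFiniteMeasure_withDensity (k.lintegral_lt_top_of_nnreal _).ne⟩

lemma coe_withContinuousDensity (k : Ω →ᵇ ℝ≥0) (m : FiniteMeasure Ω) :
    (withContinuousDensity k m : Measure Ω) = (m : Measure Ω).withDensity fun x => k x :=
  rfl

variable [OpensMeasurableSpace Ω]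

lemma lintegral_withContinuousDensity (k : Ω →ᵇ ℝ≥0) (m : FiniteMeasure Ω) {f : Ω → ℝ≥0∞}
    (hf : Measurable f) :
    ∫⁻ x, f x ∂(withContinuousDensity k m : Measure Ω) = ∫⁻ x, k x * f x ∂(m : Measure Ω) :=
  lintegral_withDensity_eq_lintegral_mul _ k.continuous.measurable.coe_nnreal_ennreal hf

lemma continuous_withContinuousDensity (k : Ω →ᵇ ℝ≥0) :
    Continuous (withContinuousDensity k : FiniteMeasure Ω → FiniteMeasure Ω) := by
  refine FiniteMeasure.continuous_iff_forall_continuous_lintegral.2 fun f => ?_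
  simpa [lintegral_withContinuousDensity k _ f.continuous.measurable.coe_nnreal_ennreal] using
    FiniteMeasure.continuous_iff_forall_continuous_lintegral.1 continuous_id (k * f)

lemma withContinuousDensity_add_one_sub {k : Ω →ᵇ ℝ≥0} (hk : ∀ x, k x ≤ 1) (m : FiniteMeasure Ω) :
    withContinuousDensity k m + withContinuousDensity (1 - k) m = m := by
  apply FiniteMeasure.toMeasure_injective
  have hsum : (fun x => (k x : ℝ≥0∞)) + (fun x => ((1 - k) x : ℝ≥0∞)) = 1 := by
    ext x
    simpa using add_tsub_cancel_of_le (ENNReal.coe_le_one_iff.2 (hk x))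
  rw [FiniteMeasure.toMeasure_add, coe_withContinuousDensity, coe_withContinuousDensity,
    ← withDensity_add_left k.continuous.measurable.coe_nnreal_ennreal, hsum, withDensity_one]

lemma tendsto_withContinuousDensity {a m : FiniteMeasure Ω} {h : Ω → ℝ≥0∞} (hh : Measurable h)
    (ha : (a : Measure Ω) = (m : Measure Ω).withDensity h) {k : ℕ → Ω →ᵇ ℝ≥0}
    (hk : ∀ n x, k n x ≤ 1)
    (hlim : ∀ᵐ x ∂(m : Measure Ω), Tendsto (fun n => (k n x : ℝ≥0∞)) atTop (𝓝 (h x))) :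
    Tendsto (fun n => withContinuousDensity (k n) m) atTop (𝓝 a) := by
  refine FiniteMeasure.tendsto_iff_forall_lintegral_tendsto.2 fun f => ?_
  have hf : Measurable fun x => (f x : ℝ≥0∞) := f.continuous.measurable.coe_nnreal_ennreal
  simp_rw [lintegral_withContinuousDensity _ m hf]
  rw [ha, lintegral_withDensity_eq_lintegral_mul _ hh hf]
  refine tendsto_lintegral_of_dominated_convergence (fun x => (f x : ℝ≥0∞))
    (fun n => (k n).continuous.measurable.coe_nnreal_ennreal.mul hf)
    (fun n => .of_forall fun x => ?_) (f.lintegral_lt_top_of_nnreal _).ne ?_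
  · exact mul_le_of_le_one_left' (ENNReal.coe_le_one_iff.2 (hk n x))
  · filter_upwards [hlim] with x hx
    exact ENNReal.Tendsto.mul_const hx (.inr ENNReal.coe_ne_top)

end ContinuousDensity

section OpenAddition

variable {Ω : Type*} [TopologicalSpace Ω] [MeasurableSpace Ω]
  [TopologicalSpace.PseudoMetrizableSpace Ω] [BorelSpace Ω]

lemma exists_seq_continuous_tendsto_ae (m : Measure Ω) [IsFiniteMeasure m] {h : Ω → ℝ≥0∞}
    (hh : Measurable h) (h1 : ∀ᵐ x ∂m, h x ≤ 1) :
    ∃ k : ℕ → Ω →ᵇ ℝ≥0, (∀ n x, k n x ≤ 1) ∧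
      ∀ᵐ x ∂m, Tendsto (fun n => (k n x : ℝ≥0∞)) atTop (𝓝 (h x)) := by
  have hint : MemLp (fun x => (h x).toReal) 1 m :=
    MemLp.of_bound hh.ennreal_toReal.aestronglyMeasurable 1 <| h1.mono fun x hx => by
      simpa using ENNReal.toReal_mono ENNReal.one_ne_top hx
  choose g hg hgL using fun n : ℕ => hint.exists_boundedContinuous_eLpNorm_sub_le
    ENNReal.one_ne_top (ε := (n : ℝ≥0∞)⁻¹) (by simp)
  have hgm : TendstoInMeasure m (fun n => g n) atTop fun x => (h x).toReal :=
    tendstoInMeasure_of_tendsto_eLpNorm one_ne_zero (fun n => (hgL n).1) hint.1 <| by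
      refine tendsto_of_tendsto_of_tendsto_of_le_of_le tendsto_const_nhds
        ENNReal.tendsto_inv_nat_nhds_zero (fun _ => zero_le) fun n => ?_
      rw [← neg_sub, eLpNorm_neg]
      exact hg n
  obtain ⟨φ, -, hφ⟩ := hgm.exists_seq_tendsto_ae
  refine ⟨fun n => (g (φ n) ⊓ 1).nnrealPart, fun n x => ?_, ?_⟩
  · simp [BoundedContinuousFunction.nnrealPart_coeFn_eq]
  · filter_upwards [hφ, h1] with x hx hx1
    have hlim := ENNReal.tendsto_ofReal (hx.min (tendsto_const_nhds (x := (1 : ℝ))))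
    rwa [min_eq_left (ENNReal.toReal_le_of_le_ofReal zero_le_one (by simpa using hx1)),
      ENNReal.ofReal_toReal (hx1.trans_lt ENNReal.one_lt_top).ne] at hlim

-- Cutting a nearby measure with a continuous approximation of the densities of `a` and `b`
-- with respect to `a + b` splits it into parts close to `a` and `b`.
theorem isOpenMap_finiteMeasure_add :
    IsOpenMap fun q : FiniteMeasure Ω × FiniteMeasure Ω => q.1 + q.2 := by
  refine isOpenMap_iff_nhds_le.2 fun ⟨a, b⟩ s hs => ?_
  set m := a + b with hm
  have ham : (a : Measure Ω) ≪ m := by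
    rw [hm, FiniteMeasure.toMeasure_add]
    exact Measure.AbsolutelyContinuous.rfl.add_right _
  have hbm : (b : Measure Ω) ≪ m := by
    rw [hm, FiniteMeasure.toMeasure_add, add_comm]
    exact Measure.AbsolutelyContinuous.rfl.add_right _
  have hsum : (a : Measure Ω).rnDeriv m + (b : Measure Ω).rnDeriv m =ᵐ[(m : Measure Ω)] 1 := by
    refine (Measure.rnDeriv_add' _ _ _).symm.trans ?_
    rw [← FiniteMeasure.toMeasure_add]
    exact Measure.rnDeriv_self _
  obtain ⟨k, hk1, hk⟩ := exists_seq_continuous_tendsto_ae (m : Measure Ω)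
    (Measure.measurable_rnDeriv (a : Measure Ω) (m : Measure Ω)) (hsum.mono fun x hx => by
      exact le_self_add.trans hx.le)
  have hka : Tendsto (fun n => withContinuousDensity (k n) m) atTop (𝓝 a) :=
    tendsto_withContinuousDensity (Measure.measurable_rnDeriv _ _)
      (Measure.withDensity_rnDeriv_eq _ _ ham).symm hk1 hk
  have hkb : Tendsto (fun n => withContinuousDensity (1 - k n) m) atTop (𝓝 b) := by
    refine tendsto_withContinuousDensity (Measure.measurable_rnDeriv _ _)
      (Measure.withDensity_rnDeriv_eq _ _ hbm).symm (fun n x => tsub_le_self) ?_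
    filter_upwards [hk, hsum] with x hx hx1
    have hlim := ENNReal.Tendsto.sub tendsto_const_nhds hx (.inl ENNReal.one_ne_top)
    rw [← ENNReal.eq_sub_of_add_eq' ENNReal.one_ne_top ((add_comm _ _).trans hx1)] at hlim
    simpa using hlim
  obtain ⟨n, hn⟩ := ((hka.prodMk_nhds hkb).eventually (eventually_mem_nhds_iff.2 hs)).exists
  have hcont : Continuous fun c =>
      (withContinuousDensity (k n) c, withContinuousDensity (1 - k n) c) :=
    (continuous_withContinuousDensity _).prodMk (continuous_withContinuousDensity _)
  filter_upwards [hcont.continuousAt.preimage_mem_nhds hn] with c hc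
  simpa only [Set.mem_preimage, withContinuousDensity_add_one_sub (hk1 n)] using hc

end OpenAddition

section Measurability

variable {Ω : Type*} [MeasurableSpace Ω]

lemma measurable_coe_probabilityMeasure :
    Measurable ((↑) : ProbabilityMeasure Ω → Measure Ω) :=
  comap_measurable _

lemma measurable_lintegral_probabilityMeasure {f : Ω → ℝ≥0∞} (hf : Measurable f) :
    Measurable fun x : ProbabilityMeasure Ω => ∫⁻ ω, f ω ∂(x : Measure Ω) :=
  (Measure.measurable_lintegral hf).comp measurable_coe_probabilityMeasure

variable [TopologicalSpace Ω] [OpensMeasurableSpace Ω]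

-- Second countability is what makes every open set a countable union of basic open sets.
instance opensMeasurableSpace_probabilityMeasure [SecondCountableTopology (ProbabilityMeasure Ω)] :
    OpensMeasurableSpace (ProbabilityMeasure Ω) := by
  let eval (φ : Ω →ᵇ ℝ≥0) (x : ProbabilityMeasure Ω) : ℝ≥0∞ := ∫⁻ ω, φ ω ∂(x : Measure Ω)
  have htop : (inferInstance : TopologicalSpace (ProbabilityMeasure Ω)) =
      ⨅ φ, TopologicalSpace.induced (eval φ) inferInstance := by
    refine le_antisymm (le_iInf fun φ => continuous_iff_le_induced.1 <|
      ProbabilityMeasure.continuous_iff_forall_continuous_lintegral.1 continuous_id φ) ?_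
    refine continuous_id_iff_le.1 ?_
    let _ : TopologicalSpace (ProbabilityMeasure Ω) :=
      ⨅ φ, TopologicalSpace.induced (eval φ) inferInstance
    exact ProbabilityMeasure.continuous_iff_forall_continuous_lintegral.2 fun φ =>
      continuous_iInf_dom continuous_induced_dom
  have hgen := htop.trans (generateFrom_iUnion_isOpen fun φ =>
    TopologicalSpace.induced (eval φ) inferInstance).symm
  refine ⟨(borel_eq_generateFrom_of_subbasis hgen).trans_le ?_⟩
  refine MeasurableSpace.generateFrom_le fun U hU => ?_
  obtain ⟨φ, V, hV, rfl⟩ := Set.mem_iUnion.1 hU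
  exact measurable_lintegral_probabilityMeasure
    φ.continuous.measurable.coe_nnreal_ennreal hV.measurableSet

end Measurability

section Splitting

variable {E : Type*} [AddCommMonoid E]

/-- The best value `g a + g b` of a splitting `m = a + b`. -/
noncomputable def splitSup (g : E → ℝ≥0∞) (m : E) : ℝ≥0∞ :=
  ⨆ (q : E × E) (_ : q.1 + q.2 = m), g q.1 + g q.2

/-- The least superadditive majorant of `g`, obtained by splitting repeatedly. -/
noncomputable def superadditiveHull (g : E → ℝ≥0∞) (m : E) : ℝ≥0∞ :=
  ⨆ n : ℕ, splitSup^[n] g m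

lemma add_le_splitSup (g : E → ℝ≥0∞) (a b : E) : g a + g b ≤ splitSup g (a + b) :=
  le_iSup₂_of_le (a, b) rfl le_rfl

lemma le_splitSup (g : E → ℝ≥0∞) : g ≤ splitSup g := fun m => by
  simpa using le_self_add.trans (add_le_splitSup g m 0)

lemma monotone_iterate_splitSup (g : E → ℝ≥0∞) : Monotone fun n => splitSup^[n] g :=
  monotone_nat_of_le_succ fun n => by
    rw [Function.iterate_succ_apply']
    exact le_splitSup _

lemma le_superadditiveHull (g : E → ℝ≥0∞) : g ≤ superadditiveHull g :=
  fun m => le_iSup (fun n => splitSup^[n] g m) 0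

lemma superadditiveHull_add_le (g : E → ℝ≥0∞) (a b : E) :
    superadditiveHull g a + superadditiveHull g b ≤ superadditiveHull g (a + b) := by
  have hmono (m : E) : Monotone fun n => splitSup^[n] g m :=
    fun i j hij => monotone_iterate_splitSup g hij m
  rw [superadditiveHull, superadditiveHull, ENNReal.iSup_add_iSup_of_monotone (hmono a) (hmono b)]
  refine iSup_le fun n => le_iSup_of_le (n + 1) ?_
  rw [Function.iterate_succ_apply']
  exact add_le_splitSup _ a b

lemma superadditiveHull_le {g V : E → ℝ≥0∞} (hgV : g ≤ V) (hV : ∀ a b, V a + V b ≤ V (a + b)) :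
    superadditiveHull g ≤ V := by
  refine fun m => iSup_le fun n => ?_
  induction n generalizing m with
  | zero => exact hgV m
  | succ n ih =>
    rw [Function.iterate_succ_apply']
    refine iSup₂_le fun q hq => ?_
    exact (add_le_add (ih q.1) (ih q.2)).trans ((hV q.1 q.2).trans_eq (congrArg V hq))

variable [TopologicalSpace E]

-- The strict superlevel sets of `splitSup g` are images under addition of open sets of pairs.
lemma lowerSemicontinuous_splitSup (hadd : IsOpenMap fun q : E × E => q.1 + q.2) {g : E → ℝ≥0∞}
    (hg : LowerSemicontinuous g) : LowerSemicontinuous (splitSup g) := by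
  have hpair : LowerSemicontinuous fun q : E × E => g q.1 + g q.2 :=
    (hg.comp continuous_fst).add (hg.comp continuous_snd)
  refine lowerSemicontinuous_iff_isOpen_preimage.2 fun c => ?_
  convert hadd _ (lowerSemicontinuous_iff_isOpen_preimage.1 hpair c) using 1
  ext m
  simp [splitSup, lt_iSup_iff, and_comm]

lemma lowerSemicontinuous_superadditiveHull (hadd : IsOpenMap fun q : E × E => q.1 + q.2)
    {g : E → ℝ≥0∞} (hg : LowerSemicontinuous g) : LowerSemicontinuous (superadditiveHull g) := by
  refine lowerSemicontinuous_iSup fun n => ?_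
  induction n with
  | zero => exact hg
  | succ n ih => rw [Function.iterate_succ_apply']; exact lowerSemicontinuous_splitSup hadd ih

end Splitting

section Superlinear

variable {E : Type*} [AddCommMonoid E] [Module ℝ≥0 E]

/-- Superlinear functionals: superadditive and positively homogeneous. One inequality suffices in
the second condition, as it is reversed by `r⁻¹` when `r ≠ 0`; it leaves `V 0` unconstrained. -/
structure IsSuperlinear (V : E → ℝ≥0∞) : Prop where
  add_le : ∀ a b, V a + V b ≤ V (a + b)
  smul_le : ∀ (r : ℝ≥0) a, r * V a ≤ V (r • a)

namespace IsSuperlinear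

variable {V : E → ℝ≥0∞} (hV : IsSuperlinear V)
include hV

lemma le_add_right (a b : E) : V a ≤ V (a + b) :=
  le_self_add.trans (hV.add_le a b)

lemma map_smul {r : ℝ≥0} (hr : r ≠ 0) (a : E) : V (r • a) = r * V a := by
  refine le_antisymm ?_ (hV.smul_le r a)
  have h := hV.smul_le r⁻¹ (r • a)
  rwa [inv_smul_smul₀ hr, ENNReal.coe_inv hr, mul_comm, ← div_eq_mul_inv,
    ENNReal.div_le_iff (by simpa) ENNReal.coe_ne_top, mul_comm] at h

lemma sum_le {ι : Type*} (s : Finset ι) (a : ι → E) : ∑ i ∈ s, V (a i) ≤ V (∑ i ∈ s, a i) := by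
  classical
  induction s using Finset.induction_on with
  | empty => simp
  | insert i s hi ih =>
    rw [Finset.sum_insert hi, Finset.sum_insert hi]
    exact (add_le_add_right ih _).trans (hV.add_le _ _)

lemma comp_linearMap {F : Type*} [AddCommMonoid F] [Module ℝ≥0 F] (L : F →ₗ[ℝ≥0] E) :
    IsSuperlinear fun a => V (L a) where
  add_le a b := by simpa only [map_add] using hV.add_le (L a) (L b)
  smul_le r a := by simpa only [_root_.map_smul] using hV.smul_le r (L a)

end IsSuperlinear

lemma smul_le_splitSup {g : E → ℝ≥0∞} (hg : ∀ (r : ℝ≥0) a, r * g a ≤ g (r • a)) (r : ℝ≥0) (m : E) :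
    r * splitSup g m ≤ splitSup g (r • m) := by
  simp_rw [splitSup, ENNReal.mul_iSup, mul_add]
  refine iSup₂_le fun q hq => le_iSup₂_of_le (r • q) ?_ (add_le_add (hg _ _) (hg _ _))
  simp [← smul_add, hq]

lemma isSuperlinear_superadditiveHull {g : E → ℝ≥0∞} (hg : ∀ (r : ℝ≥0) a, r * g a ≤ g (r • a)) :
    IsSuperlinear (superadditiveHull g) where
  add_le := superadditiveHull_add_le g
  smul_le r m := by
    have hn (n : ℕ) : ∀ (r : ℝ≥0) a, r * splitSup^[n] g a ≤ splitSup^[n] g (r • a) := by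
      induction n with
      | zero => exact hg
      | succ n ih => rw [Function.iterate_succ_apply']; exact smul_le_splitSup ih
    rw [superadditiveHull, ENNReal.mul_iSup]
    exact iSup_mono fun n => hn n r m

end Superlinear

section SmallCells

variable {X : Type*} [MeasurableSpace X]

lemma ae_measure_preimage_singleton_ne_zero {ι : Type*} [Countable ι] [MeasurableSpace ι]
    [MeasurableSingletonClass ι] {m : Measure X} {N : X → ι} (hN : Measurable N) :
    ∀ᵐ x ∂m, m (N ⁻¹' {N x}) ≠ 0 := by
  refine ae_of_ae_map hN.aemeasurable (p := fun i => m (N ⁻¹' {i}) ≠ 0) ?_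
  rw [ae_iff_of_countable]
  exact fun i hi => by rwa [Measure.map_apply hN (measurableSet_singleton i)] at hi

variable [TopologicalSpace X]

lemma exists_measurable_nat_tendsto_smallSets [TopologicalSpace.PseudoMetrizableSpace X]
    [TopologicalSpace.SeparableSpace X] [OpensMeasurableSpace X] :
    ∃ N : ℕ → X → ℕ, (∀ n, Measurable (N n)) ∧
      ∀ x, Tendsto (fun n => N n ⁻¹' {N n x}) atTop (𝓝 x).smallSets := by
  classical
  let _ := TopologicalSpace.pseudoMetrizableSpacePseudoMetric X
  rcases isEmpty_or_nonempty X with hX | hX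
  · exact ⟨fun _ _ => 0, fun _ => measurable_const, fun x => hX.elim x⟩
  let r (n : ℕ) : ℝ := 1 / (n + 1)
  let d := TopologicalSpace.denseSeq X
  have hd (n : ℕ) (x : X) : ∃ k, dist x (d k) < r n :=
    (TopologicalSpace.denseRange_denseSeq X).exists_dist_lt x Nat.one_div_pos_of_nat
  refine ⟨fun n x => Nat.find (hd n x), fun n => measurable_find _ fun k =>
    (Metric.isOpen_ball (x := d k) (ε := r n)).measurableSet, fun x => ?_⟩
  have hr : Tendsto (fun n => r n + r n) atTop (𝓝 0) := by
    have h := tendsto_one_div_add_atTop_nhds_zero_nat (𝕜 := ℝ)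
    simpa only [add_zero] using h.add h
  refine tendsto_smallSets_iff.2 fun U hU => ?_
  obtain ⟨ε, hε, hεU⟩ := Metric.mem_nhds_iff.1 hU
  filter_upwards [hr.eventually_lt_const hε] with n hn y hy
  have hyx : Nat.find (hd n y) = Nat.find (hd n x) := hy
  have hyd := Nat.find_spec (hd n y)
  rw [hyx] at hyd
  exact hεU ((dist_triangle_right y x _).trans_lt
    ((add_lt_add hyd (Nat.find_spec (hd n x))).trans hn))

lemma tendsto_setLAverage_smallSets {m : Measure X} [IsFiniteMeasure m] {f : X → ℝ≥0∞} {x : X}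
    (hf : ContinuousAt f x) (hfx : f x ≠ ∞) {ι : Type*} {l : Filter ι}
    {s : ι → Set X} (hs : Tendsto s l (𝓝 x).smallSets) (hm : ∀ n, MeasurableSet (s n))
    (h0 : ∀ n, m (s n) ≠ 0) : Tendsto (fun n => ⨍⁻ y in s n, f y ∂m) l (𝓝 (f x)) := by
  refine (ENNReal.tendsto_nhds hfx).2 fun ε hε => ?_
  filter_upwards [tendsto_smallSets_iff.1 hs _ ((ENNReal.tendsto_nhds hfx).1 hf ε hε)] with n hn
  rw [← setLAverage_const (h0 n) (measure_ne_top m _) (f x - ε),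
    ← setLAverage_const (h0 n) (measure_ne_top m _) (f x + ε)]
  simp_rw [setLAverage_eq]
  exact ⟨ENNReal.div_le_div_right (setLIntegral_mono' (hm n) fun y hy => (hn hy).1) _,
    ENNReal.div_le_div_right (setLIntegral_mono' (hm n) fun y hy => (hn hy).2) _⟩

end SmallCells

section FiniteMeasure

variable {Ω : Type*} [MeasurableSpace Ω] {V : FiniteMeasure Ω → ℝ≥0∞} (hV : IsSuperlinear V)
include hV

lemma IsSuperlinear.mono {a b : FiniteMeasure Ω} (hab : (a : Measure Ω) ≤ b) : V a ≤ V b := by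
  have hba : a + ⟨(b : Measure Ω) - a, inferInstance⟩ = b :=
    FiniteMeasure.toMeasure_injective <|
      (add_comm _ _).trans (Measure.sub_add_cancel_of_le hab)
  exact hba ▸ hV.le_add_right a _

lemma IsSuperlinear.tsum_restrict_preimage_le {ι : Type*} [MeasurableSpace ι]
    [MeasurableSingletonClass ι] (m : FiniteMeasure Ω) {N : Ω → ι} (hN : Measurable N) :
    ∑' i, V (m.restrict (N ⁻¹' {i})) ≤ V m := by
  refine ENNReal.summable.tsum_le_of_sum_le fun s => (hV.sum_le s _).trans (hV.mono ?_)
  rw [← FiniteMeasure.restrict_biUnion_finset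
    (fun i _ j _ hij => Disjoint.preimage N (Set.disjoint_singleton.2 hij))
    fun i => hN (measurableSet_singleton i)]
  exact Measure.restrict_le_self

end FiniteMeasure

section Barycenter

variable {Ω : Type*} [MeasurableSpace Ω]

lemma bind_add_measure {X : Type*} [MeasurableSpace X] (m m' : Measure X) {κ : X → Measure Ω}
    (hκ : Measurable κ) : (m + m').bind κ = m.bind κ + m'.bind κ :=
  Measure.ext fun B hB => by simp [Measure.bind_apply hB hκ.aemeasurable]

/-- The barycenter of a finite measure over probability measures. -/
noncomputable def barycenter : FiniteMeasure (ProbabilityMeasure Ω) →ₗ[ℝ≥0] FiniteMeasure Ω where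
  toFun q := ⟨(q : Measure (ProbabilityMeasure Ω)).bind (↑), ⟨by
    rw [Measure.bind_apply .univ measurable_coe_probabilityMeasure.aemeasurable]
    simp⟩⟩
  map_add' q q' := FiniteMeasure.toMeasure_injective <|
    bind_add_measure (q : Measure (ProbabilityMeasure Ω)) q' measurable_coe_probabilityMeasure
  map_smul' r q := FiniteMeasure.toMeasure_injective <|
    Measure.bind_smul r _ _

lemma lintegral_barycenter (q : FiniteMeasure (ProbabilityMeasure Ω)) {f : Ω → ℝ≥0∞}
    (hf : Measurable f) :
    ∫⁻ ω, f ω ∂(barycenter q : Measure Ω) =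
      ∫⁻ x, ∫⁻ ω, f ω ∂(x : Measure Ω) ∂(q : Measure (ProbabilityMeasure Ω)) :=
  Measure.lintegral_bind measurable_coe_probabilityMeasure.aemeasurable hf.aemeasurable

lemma mass_barycenter (q : FiniteMeasure (ProbabilityMeasure Ω)) :
    (barycenter q).mass = q.mass := by
  rw [← ENNReal.coe_inj, FiniteMeasure.ennreal_mass, FiniteMeasure.ennreal_mass]
  simpa using lintegral_barycenter q (f := 1) measurable_one

lemma barycenter_diracProba (x : ProbabilityMeasure Ω) :
    barycenter (diracProba x).toFiniteMeasure = x.toFiniteMeasure :=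
  FiniteMeasure.toMeasure_injective <| Measure.dirac_bind measurable_coe_probabilityMeasure x

end Barycenter

section Jensen

variable {Ω : Type*} [MeasurableSpace Ω]

/-- The average of the beliefs in `s` under `q`. When `q s = 0` this is the zero measure. -/
noncomputable def averageBelief (q : FiniteMeasure (ProbabilityMeasure Ω))
    (s : Set (ProbabilityMeasure Ω)) : FiniteMeasure Ω :=
  (q s)⁻¹ • barycenter (q.restrict s)

lemma lintegral_averageBelief {q : FiniteMeasure (ProbabilityMeasure Ω)}
    {s : Set (ProbabilityMeasure Ω)} (hs : q s ≠ 0) {f : Ω → ℝ≥0∞} (hf : Measurable f) :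
    ∫⁻ ω, f ω ∂(averageBelief q s : Measure Ω) =
      ⨍⁻ x in s, ∫⁻ ω, f ω ∂(x : Measure Ω) ∂(q : Measure (ProbabilityMeasure Ω)) := by
  rw [averageBelief, FiniteMeasure.toMeasure_smul, lintegral_smul_measure,
    lintegral_barycenter _ hf, setLAverage_eq, FiniteMeasure.restrict_measure_eq,
    ENNReal.smul_def, ENNReal.coe_inv hs, FiniteMeasure.ennreal_coeFn_eq_coeFn_toMeasure,
    smul_eq_mul, div_eq_mul_inv, mul_comm]

variable {V : FiniteMeasure Ω → ℝ≥0∞}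

lemma IsSuperlinear.averageBelief_mul_le (hV : IsSuperlinear V)
    (q : FiniteMeasure (ProbabilityMeasure Ω)) (s : Set (ProbabilityMeasure Ω)) :
    V (averageBelief q s) * q s ≤ V (barycenter (q.restrict s)) := by
  rcases eq_or_ne (q s) 0 with h0 | h0
  · simp [h0]
  · rw [mul_comm]
    refine (hV.smul_le _ _).trans_eq ?_
    rw [averageBelief, smul_inv_smul₀ h0]

lemma IsSuperlinear.lintegral_averageBelief_le (hV : IsSuperlinear V)
    (q : FiniteMeasure (ProbabilityMeasure Ω)) {N : ProbabilityMeasure Ω → ℕ} (hN : Measurable N) :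
    ∫⁻ x, V (averageBelief q (N ⁻¹' {N x})) ∂(q : Measure (ProbabilityMeasure Ω)) ≤
      V (barycenter q) := calc
  _ = ∑' j, V (averageBelief q (N ⁻¹' {j})) * q (N ⁻¹' {j}) := by
    rw [← lintegral_map (f := fun j => V (averageBelief q (N ⁻¹' {j})))
      (measurable_of_countable _) hN, lintegral_countable']
    simp_rw [Measure.map_apply hN (measurableSet_singleton _),
      FiniteMeasure.ennreal_coeFn_eq_coeFn_toMeasure]
  _ ≤ ∑' j, V (barycenter (q.restrict (N ⁻¹' {j}))) :=
    ENNReal.tsum_le_tsum fun j => hV.averageBelief_mul_le q _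
  _ ≤ V (barycenter q) := (hV.comp_linearMap barycenter).tsum_restrict_preimage_le q hN

variable [TopologicalSpace Ω] [OpensMeasurableSpace Ω]

lemma tendsto_averageBelief {q : FiniteMeasure (ProbabilityMeasure Ω)} {x : ProbabilityMeasure Ω}
    {ι : Type*} {l : Filter ι} {s : ι → Set (ProbabilityMeasure Ω)}
    (hs : Tendsto s l (𝓝 x).smallSets) (hm : ∀ n, MeasurableSet (s n)) (h0 : ∀ n, q (s n) ≠ 0) :
    Tendsto (fun n => averageBelief q (s n)) l (𝓝 x.toFiniteMeasure) := by
  refine FiniteMeasure.tendsto_iff_forall_lintegral_tendsto.2 fun φ => ?_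
  simp_rw [lintegral_averageBelief (h0 _) φ.continuous.measurable.coe_nnreal_ennreal]
  refine tendsto_setLAverage_smallSets
    (f := fun y : ProbabilityMeasure Ω => ∫⁻ ω, φ ω ∂(y : Measure Ω))
    (ProbabilityMeasure.continuous_iff_forall_continuous_lintegral.1 continuous_id φ).continuousAt
    (φ.lintegral_lt_top_of_nnreal _).ne hs hm fun n => ?_
  rw [← FiniteMeasure.ennreal_coeFn_eq_coeFn_toMeasure]
  exact ENNReal.coe_ne_zero.2 (h0 n)

-- Countable superadditivity gives the inequality with each belief replaced by the average of its
-- cell in a fine partition; lower semicontinuity and Fatou's lemma then let the cells shrink.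
theorem IsSuperlinear.lintegral_le_barycenter [SecondCountableTopology (ProbabilityMeasure Ω)]
    [TopologicalSpace.PseudoMetrizableSpace (ProbabilityMeasure Ω)] (hV : IsSuperlinear V)
    (hlsc : LowerSemicontinuous V) (q : FiniteMeasure (ProbabilityMeasure Ω)) :
    ∫⁻ x, V x.toFiniteMeasure ∂(q : Measure (ProbabilityMeasure Ω)) ≤ V (barycenter q) := by
  obtain ⟨N, hN, hcell⟩ :=
    exists_measurable_nat_tendsto_smallSets (X := ProbabilityMeasure Ω)
  let avg (n : ℕ) (x : ProbabilityMeasure Ω) : FiniteMeasure Ω := averageBelief q (N n ⁻¹' {N n x})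
  have hae : ∀ᵐ x ∂(q : Measure (ProbabilityMeasure Ω)), ∀ n, q (N n ⁻¹' {N n x}) ≠ 0 := by
    refine ae_all_iff.2 fun n => (ae_measure_preimage_singleton_ne_zero (hN n)).mono fun x hx => ?_
    rwa [← FiniteMeasure.ennreal_coeFn_eq_coeFn_toMeasure, ENNReal.coe_ne_zero] at hx
  have hliminf : ∀ᵐ x ∂(q : Measure (ProbabilityMeasure Ω)),
      V x.toFiniteMeasure ≤ liminf (fun n => V (avg n x)) atTop := hae.mono fun x hx => by
    have hlim := tendsto_averageBelief (hcell x) (fun n => hN n (measurableSet_singleton _)) hx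
    exact (lowerSemicontinuousAt_iff_le_liminf.1 (hlsc _)).trans (hlim.liminf_le_liminf_comp)
  calc
    _ ≤ ∫⁻ x, liminf (fun n => V (avg n x)) atTop ∂(q : Measure (ProbabilityMeasure Ω)) :=
      lintegral_mono_ae hliminf
    _ ≤ liminf (fun n => ∫⁻ x, V (avg n x) ∂(q : Measure (ProbabilityMeasure Ω))) atTop :=
      lintegral_liminf_le fun n =>
        (measurable_of_countable fun j => V (averageBelief q (N n ⁻¹' {j}))).comp (hN n)
    _ ≤ V (barycenter q) :=
      (liminf_le_liminf (.of_forall fun n => hV.lintegral_averageBelief_le q (hN n))).trans_eq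
        (liminf_const _)

end Jensen

section PersuasionValue

variable {Ω : Type*} [MeasurableSpace Ω]

/-- The persuasion value of a belief payoff `h` at the finite measure `m`: the supremum of `∫ h`
over the ways of splitting `m` into beliefs. Unnormalized priors make the concavity of the value
in the prior into superlinearity. -/
noncomputable def persuasionValue (h : ProbabilityMeasure Ω → ℝ≥0∞) (m : FiniteMeasure Ω) : ℝ≥0∞ :=
  ⨆ (q : FiniteMeasure (ProbabilityMeasure Ω)) (_ : barycenter q = m),
    ∫⁻ x, h x ∂(q : Measure (ProbabilityMeasure Ω))

lemma lintegral_le_persuasionValue (h : ProbabilityMeasure Ω → ℝ≥0∞)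
    (q : FiniteMeasure (ProbabilityMeasure Ω)) :
    ∫⁻ x, h x ∂(q : Measure (ProbabilityMeasure Ω)) ≤ persuasionValue h (barycenter q) :=
  le_iSup₂_of_le q rfl le_rfl

lemma mass_smul (r : ℝ≥0) (m : FiniteMeasure Ω) : (r • m).mass = r * m.mass := by
  rw [FiniteMeasure.mass, FiniteMeasure.smul_apply, smul_eq_mul, FiniteMeasure.mass]

variable [Nonempty Ω]

lemma barycenter_mass_smul_diracProba (m : FiniteMeasure Ω) :
    barycenter (m.mass • (diracProba m.normalize).toFiniteMeasure) = m := by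
  rw [LinearMap.map_smul, barycenter_diracProba, ← m.self_eq_mass_smul_normalize]

lemma isSuperlinear_persuasionValue (h : ProbabilityMeasure Ω → ℝ≥0∞) :
    IsSuperlinear (persuasionValue h) where
  add_le a b := by
    have hsplit (m : FiniteMeasure Ω) : ∃ q, barycenter q = m :=
      ⟨_, barycenter_mass_smul_diracProba m⟩
    refine ENNReal.biSup_add_biSup_le' (hsplit a) (hsplit b) fun q hq q' hq' => ?_
    rw [← lintegral_add_measure, ← FiniteMeasure.toMeasure_add, ← hq, ← hq', ← map_add]
    exact lintegral_le_persuasionValue h _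
  smul_le r m := by
    simp_rw [persuasionValue, ENNReal.mul_iSup]
    refine iSup₂_le fun q hq => le_iSup₂_of_le (r • q) (by rw [LinearMap.map_smul, hq]) ?_
    rw [FiniteMeasure.toMeasure_smul, lintegral_smul_measure, ENNReal.smul_def, smul_eq_mul]

/-- The positively homogeneous extension of `h` from probability measures to finite measures. -/
noncomputable def homogeneousExtension (h : ProbabilityMeasure Ω → ℝ≥0∞) (m : FiniteMeasure Ω) :
    ℝ≥0∞ :=
  m.mass * h m.normalize

lemma homogeneousExtension_toFiniteMeasure (h : ProbabilityMeasure Ω → ℝ≥0∞)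
    (x : ProbabilityMeasure Ω) : homogeneousExtension h x.toFiniteMeasure = h x := by
  simp [homogeneousExtension]

lemma normalize_smul {r : ℝ≥0} (hr : r ≠ 0) (m : FiniteMeasure Ω) :
    (r • m).normalize = m.normalize := by
  rcases eq_or_ne m 0 with rfl | hm
  · rw [smul_zero]
  · refine ProbabilityMeasure.eq_of_forall_apply_eq _ _ fun s _ => ?_
    rw [FiniteMeasure.normalize_eq_of_nonzero _ (smul_ne_zero hr hm),
      FiniteMeasure.normalize_eq_of_nonzero _ hm, mass_smul, FiniteMeasure.smul_apply,
      smul_eq_mul, mul_inv, mul_mul_mul_comm, inv_mul_cancel₀ hr, one_mul]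

lemma smul_le_homogeneousExtension (h : ProbabilityMeasure Ω → ℝ≥0∞) (r : ℝ≥0)
    (m : FiniteMeasure Ω) : r * homogeneousExtension h m ≤ homogeneousExtension h (r • m) := by
  rcases eq_or_ne r 0 with rfl | hr
  · simp
  · rw [homogeneousExtension, homogeneousExtension, normalize_smul hr, mass_smul,
      ENNReal.coe_mul, mul_assoc]

lemma homogeneousExtension_le_persuasionValue {h : ProbabilityMeasure Ω → ℝ≥0∞}
    (hh : Measurable h) : homogeneousExtension h ≤ persuasionValue h := fun m => by
  refine le_iSup₂_of_le _ (barycenter_mass_smul_diracProba m) (ge_of_eq ?_)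
  rw [FiniteMeasure.toMeasure_smul, lintegral_smul_measure]
  exact congrArg (m.mass • ·) (lintegral_dirac' m.normalize hh)

variable [TopologicalSpace Ω] [OpensMeasurableSpace Ω]

lemma lowerSemicontinuous_homogeneousExtension {h : ProbabilityMeasure Ω → ℝ≥0∞}
    (hh : LowerSemicontinuous h) : LowerSemicontinuous (homogeneousExtension h) := fun m => by
  rcases eq_or_ne m 0 with rfl | hm
  · intro y hy
    simp [homogeneousExtension] at hy
  refine lowerSemicontinuousAt_iff_le_liminf.2 ?_
  have hmass : liminf (fun a : FiniteMeasure Ω => (a.mass : ℝ≥0∞)) (𝓝 m) = m.mass :=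
    (ENNReal.tendsto_coe.2 FiniteMeasure.continuous_mass.continuousAt).liminf_eq
  have hnorm : h m.normalize ≤ liminf (fun a : FiniteMeasure Ω => h a.normalize) (𝓝 m) :=
    (lowerSemicontinuousAt_iff_le_liminf.1 (hh _)).trans
      (FiniteMeasure.tendsto_normalize_of_tendsto tendsto_id hm).liminf_le_liminf_comp
  calc homogeneousExtension h m
    _ ≤ liminf (fun a : FiniteMeasure Ω => (a.mass : ℝ≥0∞)) (𝓝 m) *
          liminf (fun a : FiniteMeasure Ω => h a.normalize) (𝓝 m) := by
      rw [hmass]; exact mul_le_mul_right hnorm _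
    _ ≤ _ := ENNReal.le_liminf_mul

end PersuasionValue

section LowerSemicontinuity

variable {Ω : Type*} [Nonempty Ω] [MeasurableSpace Ω] [TopologicalSpace Ω]
  [TopologicalSpace.PseudoMetrizableSpace Ω] [BorelSpace Ω]
  [SecondCountableTopology (ProbabilityMeasure Ω)]
  [TopologicalSpace.PseudoMetrizableSpace (ProbabilityMeasure Ω)]

theorem persuasionValue_eq_superadditiveHull {h : ProbabilityMeasure Ω → ℝ≥0∞}
    (hh : LowerSemicontinuous h) :
    persuasionValue h = superadditiveHull (homogeneousExtension h) := by
  refine le_antisymm (fun m => iSup₂_le fun q hq => ?_)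
    (superadditiveHull_le (homogeneousExtension_le_persuasionValue hh.measurable)
      (isSuperlinear_persuasionValue h).add_le)
  calc ∫⁻ x, h x ∂(q : Measure (ProbabilityMeasure Ω))
    _ ≤ ∫⁻ x, superadditiveHull (homogeneousExtension h) x.toFiniteMeasure
          ∂(q : Measure (ProbabilityMeasure Ω)) := lintegral_mono fun x =>
        (homogeneousExtension_toFiniteMeasure h x).symm.trans_le (le_superadditiveHull _ _)
    _ ≤ superadditiveHull (homogeneousExtension h) (barycenter q) :=
      (isSuperlinear_superadditiveHull (smul_le_homogeneousExtension h)).lintegral_le_barycenter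
        (lowerSemicontinuous_superadditiveHull isOpenMap_finiteMeasure_add
          (lowerSemicontinuous_homogeneousExtension hh)) q
    _ = _ := by rw [hq]

theorem lowerSemicontinuous_persuasionValue {h : ProbabilityMeasure Ω → ℝ≥0∞}
    (hh : LowerSemicontinuous h) : LowerSemicontinuous (persuasionValue h) := by
  rw [persuasionValue_eq_superadditiveHull hh]
  exact lowerSemicontinuous_superadditiveHull isOpenMap_finiteMeasure_add
    (lowerSemicontinuous_homogeneousExtension hh)

end LowerSemicontinuity

section Perturbation

variable {Ω : Type*} [MeasurableSpace Ω]

/-- The linear map adding to a finite measure a multiple of `b` proportional to its mass. On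
probability measures it is `x ↦ x + b`. -/
noncomputable def massPerturbation (b : FiniteMeasure Ω) :
    FiniteMeasure Ω →ₗ[ℝ≥0] FiniteMeasure Ω where
  toFun m := m + m.mass • b
  map_add' m m' := by
    have hmass : (m + m').mass = m.mass + m'.mass := by simp [FiniteMeasure.mass]
    rw [hmass, add_smul, add_add_add_comm]
  map_smul' r m := by
    rw [mass_smul, mul_smul, RingHom.id_apply, smul_add]

lemma massPerturbation_toFiniteMeasure (b : FiniteMeasure Ω) (x : ProbabilityMeasure Ω) :
    massPerturbation b x.toFiniteMeasure = x.toFiniteMeasure + b := by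
  simp [massPerturbation]

lemma massPerturbation_smul_self (ε : ℝ≥0) (b : FiniteMeasure Ω) :
    massPerturbation (ε • b) b = (1 + ε * b.mass) • b := by
  simp [massPerturbation, add_smul, smul_smul, mul_comm]

variable [TopologicalSpace Ω] [OpensMeasurableSpace Ω]

lemma continuous_massPerturbation (b : FiniteMeasure Ω) : Continuous (massPerturbation b) :=
  continuous_id.add (FiniteMeasure.continuous_mass.smul continuous_const)

variable [SecondCountableTopology (ProbabilityMeasure Ω)]
  [TopologicalSpace.PseudoMetrizableSpace (ProbabilityMeasure Ω)]

-- Perturb by `ε • barycenter q`, integrate over `q`, and let `ε` tend to `0`.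
theorem IsSuperlinear.lintegral_le_of_forall_le_perturbation {V : FiniteMeasure Ω → ℝ≥0∞}
    (hV : IsSuperlinear V) (hlsc : LowerSemicontinuous V)
    (q : FiniteMeasure (ProbabilityMeasure Ω)) {f : ProbabilityMeasure Ω → ℝ≥0∞}
    (hf : ∀ᵐ x ∂(q : Measure (ProbabilityMeasure Ω)), ∀ ε : ℝ≥0, 0 < ε →
      f x ≤ V (x.toFiniteMeasure + ε • barycenter q)) :
    ∫⁻ x, f x ∂(q : Measure (ProbabilityMeasure Ω)) ≤ V (barycenter q) := by
  set b := barycenter q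
  have hε (ε : ℝ≥0) (hpos : 0 < ε) :
      ∫⁻ x, f x ∂(q : Measure (ProbabilityMeasure Ω)) ≤ (1 + ε * b.mass : ℝ≥0) * V b := calc
    _ ≤ ∫⁻ x, V (massPerturbation (ε • b) x.toFiniteMeasure)
          ∂(q : Measure (ProbabilityMeasure Ω)) := lintegral_mono_ae <| hf.mono fun x hx => by
        rw [massPerturbation_toFiniteMeasure]; exact hx ε hpos
    _ ≤ V (massPerturbation (ε • b) b) :=
      (hV.comp_linearMap _).lintegral_le_barycenter
        (hlsc.comp (continuous_massPerturbation _)) q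
    _ = _ := by rw [massPerturbation_smul_self, hV.map_smul (by positivity)]
  have hlim : Tendsto (fun ε : ℝ≥0 => ((1 + ε * b.mass : ℝ≥0) : ℝ≥0∞) * V b) (𝓝[>] 0)
      (𝓝 (V b)) := by
    have hcoef : Tendsto (fun ε : ℝ≥0 => ((1 + ε * b.mass : ℝ≥0) : ℝ≥0∞)) (𝓝[>] 0) (𝓝 1) := by
      refine (Continuous.tendsto' (by fun_prop) _ _ (by simp)).mono_left nhdsWithin_le_nhds
    simpa using ENNReal.Tendsto.mul_const hcoef (.inl one_ne_zero)
  exact ge_of_tendsto hlim (eventually_mem_nhdsWithin.mono hε)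

end Perturbation

section InformationPolicies

variable {Ω : Type*} [MeasurableSpace Ω]

lemma mem_infoPolicies_iff {μ0 : ProbabilityMeasure Ω}
    {p : ProbabilityMeasure (ProbabilityMeasure Ω)} :
    p ∈ infoPolicies μ0 ↔ barycenter p.toFiniteMeasure = μ0.toFiniteMeasure := by
  have hB {B : Set Ω} (hB : MeasurableSet B) :
      ∫ ν, ((ν : Measure Ω) B).toReal ∂(p : Measure (ProbabilityMeasure Ω)) =
        ((barycenter p.toFiniteMeasure : Measure Ω) B).toReal := by
    have hmeas : Measurable fun ν : ProbabilityMeasure Ω => (ν : Measure Ω) B :=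
      (Measure.measurable_coe hB).comp measurable_coe_probabilityMeasure
    rw [integral_toReal hmeas.aemeasurable (.of_forall fun ν => measure_lt_top _ _)]
    simpa [lintegral_indicator_one, hB] using congrArg ENNReal.toReal
      (lintegral_barycenter p.toFiniteMeasure (measurable_one.indicator hB)).symm
  refine ⟨fun hp => FiniteMeasure.eq_of_forall_toMeasure_apply_eq _ _ fun B hBm => ?_,
    fun hp B hBm => ?_⟩
  · exact (ENNReal.toReal_eq_toReal_iff' (measure_ne_top _ _) (measure_ne_top _ _)).1
      ((hB hBm).symm.trans (hp B hBm))
  · rw [hB hBm, hp]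
    rfl

lemma diracProba_mem_infoPolicies (μ0 : ProbabilityMeasure Ω) : diracProba μ0 ∈ infoPolicies μ0 :=
  mem_infoPolicies_iff.2 (barycenter_diracProba μ0)

lemma exists_toFiniteMeasure_eq {q : FiniteMeasure Ω} (hq : q.mass = 1) :
    ∃ p : ProbabilityMeasure Ω, p.toFiniteMeasure = q :=
  ⟨⟨q, ⟨by rw [← FiniteMeasure.ennreal_mass, hq, ENNReal.coe_one]⟩⟩, rfl⟩

lemma persuasionValue_toFiniteMeasure (h : ProbabilityMeasure Ω → ℝ≥0∞)
    (μ0 : ProbabilityMeasure Ω) :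
    persuasionValue h μ0.toFiniteMeasure =
      ⨆ p ∈ infoPolicies μ0, ∫⁻ x, h x ∂(p : Measure (ProbabilityMeasure Ω)) := by
  refine le_antisymm (iSup₂_le fun q hq => ?_) (iSup₂_le fun p hp => ?_)
  · obtain ⟨p, rfl⟩ : ∃ p : ProbabilityMeasure (ProbabilityMeasure Ω), p.toFiniteMeasure = q :=
      exists_toFiniteMeasure_eq (by
        rw [← mass_barycenter, hq, ProbabilityMeasure.mass_toFiniteMeasure])
    exact le_iSup₂_of_le p (mem_infoPolicies_iff.2 hq) le_rfl
  · exact le_iSup₂_of_le p.toFiniteMeasure (mem_infoPolicies_iff.1 hp) le_rfl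

section BoundedPayoff

variable {w : ProbabilityMeasure Ω → ℝ} {M : ℝ} (hM : ∀ x, |w x| ≤ M) (μ0 : ProbabilityMeasure Ω)
include hM

lemma abs_integral_le_of_abs_le (p : ProbabilityMeasure (ProbabilityMeasure Ω)) :
    |∫ x, w x ∂(p : Measure (ProbabilityMeasure Ω))| ≤ M := by
  simpa using norm_integral_le_of_norm_le_const (f := w)
    (μ := (p : Measure (ProbabilityMeasure Ω))) (.of_forall hM)

lemma bddAbove_integral_image (s : Set (ProbabilityMeasure (ProbabilityMeasure Ω))) :
    BddAbove ((fun p : ProbabilityMeasure (ProbabilityMeasure Ω) =>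
      ∫ x, w x ∂(p : Measure (ProbabilityMeasure Ω))) '' s) :=
  ⟨M, Set.forall_mem_image.2 fun p _ => (abs_le.1 (abs_integral_le_of_abs_le hM p)).2⟩

lemma neg_le_sSup_integral : -M ≤ sSup ((fun p : ProbabilityMeasure (ProbabilityMeasure Ω) =>
    ∫ x, w x ∂(p : Measure (ProbabilityMeasure Ω))) '' infoPolicies μ0) :=
  le_csSup_of_le (bddAbove_integral_image hM _)
    (Set.mem_image_of_mem _ (diracProba_mem_infoPolicies μ0))
    (abs_le.1 (abs_integral_le_of_abs_le hM _)).1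

theorem ofReal_sSup_integral_add (hw : Measurable w) :
    ENNReal.ofReal (sSup ((fun p : ProbabilityMeasure (ProbabilityMeasure Ω) =>
        ∫ x, w x ∂(p : Measure (ProbabilityMeasure Ω))) '' infoPolicies μ0) + M) =
      persuasionValue (fun x => ENNReal.ofReal (w x + M)) μ0.toFiniteMeasure := by
  have hmono : Monotone fun r : ℝ => ENNReal.ofReal (r + M) := fun r s hrs => by
    dsimp only; gcongr
  have hcont : Continuous fun r : ℝ => ENNReal.ofReal (r + M) :=
    ENNReal.continuous_ofReal.comp (continuous_add_const M)
  rw [hmono.map_csSup_of_continuousAt hcont.continuousAt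
    (Set.Nonempty.image _ ⟨_, diracProba_mem_infoPolicies μ0⟩) (bddAbove_integral_image hM _),
    Set.image_image, sSup_image, persuasionValue_toFiniteMeasure]
  refine biSup_congr fun p _ => ?_
  have hint : Integrable w (p : Measure (ProbabilityMeasure Ω)) :=
    .of_bound hw.aestronglyMeasurable M (.of_forall hM)
  have hadd := integral_add hint (integrable_const M)
  rw [integral_const, probReal_univ, one_smul] at hadd
  rw [← hadd]
  exact ofReal_integral_eq_lintegral_ofReal (hint.add (integrable_const M))
    (.of_forall fun x => neg_le_iff_add_nonneg.1 (abs_le.1 (hM x)).1)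

end BoundedPayoff

end InformationPolicies

section Game

lemma isCompact_image_of_isClosed_graph {X A : Type*} [TopologicalSpace X] [TopologicalSpace A]
    [CompactSpace A] {g : X → A → ℝ} (hg : Continuous fun q : X × A => g q.1 q.2)
    {s : X → Set A} (hs : IsClosed {q : X × A | q.2 ∈ s q.1}) (x : X) :
    IsCompact (g x '' s x) :=
  (hs.preimage (Continuous.prodMk_right x)).isCompact.image (hg.comp (Continuous.prodMk_right x))

-- Sublevel sets are projections, along a compact space, of closed sets.
lemma lowerSemicontinuous_sInf_image {X A : Type*} [TopologicalSpace X] [TopologicalSpace A]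
    [CompactSpace A] {g : X → A → ℝ} (hg : Continuous fun q : X × A => g q.1 q.2)
    {s : X → Set A} (hs : IsClosed {q : X × A | q.2 ∈ s q.1}) (hne : ∀ x, (s x).Nonempty) :
    LowerSemicontinuous fun x => sInf (g x '' s x) := by
  refine lowerSemicontinuous_iff_isClosed_preimage.2 fun c => ?_
  convert isClosedMap_fst_of_compactSpace _ (hs.inter (isClosed_le hg (continuous_const (y := c))))
    using 1
  ext x
  have hcompact := isCompact_image_of_isClosed_graph hg hs x
  constructor
  · intro hx
    obtain ⟨a, ha, hga⟩ := hcompact.sInf_mem ((hne x).image _)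
    exact ⟨(x, a), ⟨ha, hga.trans_le hx⟩, rfl⟩
  · rintro ⟨⟨x, a⟩, ⟨ha, hga⟩, rfl⟩
    exact (csInf_le hcompact.bddBelow (Set.mem_image_of_mem _ ha)).trans hga

variable {A Θ : Type*} [TopologicalSpace A] [TopologicalSpace Θ] [CompactSpace Θ]
  [MeasurableSpace Θ] [OpensMeasurableSpace Θ]

lemma continuous_integral_prod {u : A → Θ → ℝ} (hu : Continuous fun p : A × Θ => u p.1 p.2) :
    Continuous fun q : ProbabilityMeasure Θ × A => ∫ θ, u q.2 θ ∂(q.1 : Measure Θ) := by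
  have hjoint : Continuous fun q : C(Θ, ℝ) × ProbabilityMeasure Θ =>
      ∫ θ, q.1 θ ∂(q.2 : Measure Θ) := by
    refine continuous_prod_of_continuous_lipschitzWith _ 1 (fun φ => ?_) fun μ => ?_
    · exact ProbabilityMeasure.continuous_iff_forall_continuous_integral.1 continuous_id
        (BoundedContinuousFunction.mkOfCompact φ)
    · refine LipschitzWith.of_dist_le_mul fun φ ψ => ?_
      have hint (φ : C(Θ, ℝ)) : Integrable φ (μ : Measure Θ) :=
        (BoundedContinuousFunction.mkOfCompact φ).integrable _
      have hdist : ∀ θ, ‖φ θ - ψ θ‖ ≤ dist φ ψ := fun θ =>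
        (dist_eq_norm _ _).symm.trans_le (ContinuousMap.dist_apply_le_dist θ)
      rw [dist_eq_norm, ← integral_sub (hint φ) (hint ψ), NNReal.coe_one, one_mul]
      simpa using norm_integral_le_of_norm_le_const (μ := (μ : Measure Θ)) (.of_forall hdist)
  exact hjoint.comp (((ContinuousMap.curry ⟨_, hu⟩).continuous.comp continuous_snd).prodMk
    continuous_fst)

variable {uS uR : A → Θ → ℝ}

lemma isClosed_graph_bestResponses (hR : Continuous fun p : A × Θ => uR p.1 p.2) :
    IsClosed {q : ProbabilityMeasure Θ × A | q.2 ∈ bestResponses uR q.1} := by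
  have hcont := continuous_integral_prod hR
  have hgraph : {q : ProbabilityMeasure Θ × A | q.2 ∈ bestResponses uR q.1} =
      ⋂ a, {q | ∫ θ, uR a θ ∂(q.1 : Measure Θ) ≤ ∫ θ, uR q.2 θ ∂(q.1 : Measure Θ)} := by
    ext q
    simp [bestResponses]
  exact hgraph ▸ isClosed_iInter fun a => isClosed_le
    (hcont.comp (continuous_fst.prodMk continuous_const)) hcont

variable [CompactSpace A] [Nonempty A]

lemma bestResponses_nonempty (hR : Continuous fun p : A × Θ => uR p.1 p.2)
    (μ : ProbabilityMeasure Θ) : (bestResponses uR μ).Nonempty := by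
  obtain ⟨a, -, ha⟩ := isCompact_univ.exists_isMaxOn Set.univ_nonempty
    ((continuous_integral_prod hR).comp (Continuous.prodMk_right μ)).continuousOn
  exact ⟨a, fun a' => ha (Set.mem_univ a')⟩

lemma lowerSemicontinuous_wFun (hS : Continuous fun p : A × Θ => uS p.1 p.2)
    (hR : Continuous fun p : A × Θ => uR p.1 p.2) : LowerSemicontinuous (wFun uS uR) :=
  lowerSemicontinuous_sInf_image (continuous_integral_prod hS) (isClosed_graph_bestResponses hR)
    (bestResponses_nonempty hR)

lemma exists_abs_wFun_le (hS : Continuous fun p : A × Θ => uS p.1 p.2)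
    (hR : Continuous fun p : A × Θ => uR p.1 p.2) : ∃ M, ∀ μ, |wFun uS uR μ| ≤ M := by
  obtain ⟨M, hM⟩ := isCompact_univ.exists_bound_of_continuousOn hS.continuousOn
  refine ⟨M, fun μ => ?_⟩
  obtain ⟨a, -, ha⟩ := (isCompact_image_of_isClosed_graph (g := senderEU uS)
    (continuous_integral_prod hS) (isClosed_graph_bestResponses hR) μ).sInf_mem
      ((bestResponses_nonempty hR μ).image _)
  rw [wFun, ← ha]
  simpa [senderEU] using norm_integral_le_of_norm_le_const (μ := (μ : Measure Θ))
    (.of_forall fun θ => hM (a, θ) trivial)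

end Game

section PriorPerturbation

variable {Θ : Type*} [MeasurableSpace Θ]

lemma ofReal_integral_le_lintegral_ofReal {X : Type*} [MeasurableSpace X] {m : Measure X}
    {f : X → ℝ} (hf : Integrable f m) :
    ENNReal.ofReal (∫ x, f x ∂m) ≤ ∫⁻ x, ENNReal.ofReal (f x) ∂m := by
  rw [integral_eq_lintegral_pos_part_sub_lintegral_neg_part hf]
  exact (ENNReal.ofReal_le_ofReal (sub_le_self _ ENNReal.toReal_nonneg)).trans
    ENNReal.ofReal_toReal_le

lemma exists_mixture_le_add_smul {μ μ0 : ProbabilityMeasure Θ} {γ : ℝ} (hγ : 0 < γ)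
    (hμ : scaledLE γ μ μ0) (x : ProbabilityMeasure Θ) {ε : ℝ≥0} (hε : 0 < ε) {lam0 : ℝ}
    (hlam0 : 0 < lam0) (hlam1 : lam0 ≤ 1) :
    ∃ lam, 0 < lam ∧ lam ≤ lam0 ∧ ∃ ν : ProbabilityMeasure Θ,
      (ν : Measure Θ) = ENNReal.ofReal lam • (μ : Measure Θ) +
        ENNReal.ofReal (1 - lam) • (x : Measure Θ) ∧
      (ν : Measure Θ) ≤ x + ε • (μ0 : Measure Θ) := by
  set lam := min lam0 (ε * γ)
  have hpos : 0 < lam := lt_min hlam0 (by positivity)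
  have hle1 : lam ≤ 1 := (min_le_left _ _).trans hlam1
  let ν : ProbabilityMeasure Θ :=
    ⟨ENNReal.ofReal lam • (μ : Measure Θ) + ENNReal.ofReal (1 - lam) • (x : Measure Θ),
      ⟨by simp [← ENNReal.ofReal_add hpos.le (sub_nonneg.2 hle1)]⟩⟩
  refine ⟨lam, hpos, min_le_left _ _, ν, rfl, Measure.le_iff.2 fun E hE => ?_⟩
  have hx : ENNReal.ofReal (1 - lam) * (x : Measure Θ) E ≤ (x : Measure Θ) E :=
    mul_le_of_le_one_left' (ENNReal.ofReal_le_one.2 (sub_le_self _ hpos.le))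
  have hμ0 : ENNReal.ofReal lam * (μ : Measure Θ) E ≤ ε * (μ0 : Measure Θ) E := calc
    _ ≤ ENNReal.ofReal (ε * γ) * (μ : Measure Θ) E := by gcongr; exact min_le_right _ _
    _ = ε * (ENNReal.ofReal γ * (μ : Measure Θ) E) := by
      rw [ENNReal.ofReal_mul ε.coe_nonneg, ENNReal.ofReal_coe_nnreal, mul_assoc]
    _ ≤ ε * (μ0 : Measure Θ) E := by gcongr; exact hμ E hE
  exact (add_le_add hμ0 hx).trans_eq (add_comm _ _)

end PriorPerturbation

end BayesianPersuasion

open BayesianPersuasion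

theorem wHat_ge_integral_of_prior_perturbation_general
    {A Θ : Type*} [TopologicalSpace A] [CompactSpace A] [Nonempty A]
    [TopologicalSpace Θ] [CompactSpace Θ] [TopologicalSpace.MetrizableSpace Θ]
    [MeasurableSpace Θ] [BorelSpace Θ]
    {uS uR : A → Θ → ℝ}
    (hS : Continuous fun p : A × Θ => uS p.1 p.2)
    (hR : Continuous fun p : A × Θ => uR p.1 p.2)
    {μ0 : ProbabilityMeasure Θ}
    {p : ProbabilityMeasure (ProbabilityMeasure Θ)} (hp : p ∈ infoPolicies μ0)
    {f : ProbabilityMeasure Θ → ℝ} (hf : Integrable f (p : Measure (ProbabilityMeasure Θ)))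
    (h : ∀ᵐ x : ProbabilityMeasure Θ ∂(p : Measure (ProbabilityMeasure Θ)),
      ∀ ε : ℝ≥0, 0 < ε →
      ∃ ν : ProbabilityMeasure Θ, (ν : Measure Θ) ≤ x + ε • (μ0 : Measure Θ) ∧
        f x ≤ wHat uS uR ν) :
    ∫ x, f x ∂(p : Measure (ProbabilityMeasure Θ)) ≤ wHat uS uR μ0 := by
  have : Nonempty Θ := μ0.nonempty
  obtain ⟨M, hM⟩ := exists_abs_wFun_le hS hR
  have hw := lowerSemicontinuous_wFun hS hR
  set V := persuasionValue fun x => ENNReal.ofReal (wFun uS uR x + M)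
  have hwHat (ν : ProbabilityMeasure Θ) :
      ENNReal.ofReal (wHat uS uR ν + M) = V ν.toFiniteMeasure :=
    ofReal_sSup_integral_add hM ν hw.measurable
  have hV : IsSuperlinear V := isSuperlinear_persuasionValue _
  have hVlsc : LowerSemicontinuous V := lowerSemicontinuous_persuasionValue <|
    (ENNReal.continuous_ofReal.comp (continuous_add_const M)).comp_lowerSemicontinuous hw
      fun r s hrs => ENNReal.ofReal_le_ofReal (add_le_add_left hrs M)
  have hint := integral_add hf (integrable_const M)
  rw [integral_const, probReal_univ, one_smul] at hint
  have hmain : ENNReal.ofReal (∫ x, f x ∂(p : Measure (ProbabilityMeasure Θ)) + M) ≤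
      ENNReal.ofReal (wHat uS uR μ0 + M) := calc
    _ ≤ ∫⁻ x, ENNReal.ofReal (f x + M) ∂(p : Measure (ProbabilityMeasure Θ)) :=
      hint ▸ ofReal_integral_le_lintegral_ofReal (hf.add (integrable_const M))
    _ ≤ V (barycenter p.toFiniteMeasure) := by
      refine hV.lintegral_le_of_forall_le_perturbation hVlsc p.toFiniteMeasure
        (h.mono fun x hx ε hε => ?_)
      obtain ⟨ν, hν, hfν⟩ := hx ε hε
      rw [mem_infoPolicies_iff.1 hp]
      exact (ENNReal.ofReal_le_ofReal (add_le_add_left hfν M)).trans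
        ((hwHat ν).trans_le (hV.mono hν))
    _ = _ := by rw [mem_infoPolicies_iff.1 hp, hwHat]
  exact le_of_add_le_add_right <|
    (ENNReal.ofReal_le_ofReal_iff (neg_le_iff_add_nonneg.1 (neg_le_sSup_integral hM μ0))).1 hmain

/-- If `p ∈ I(μ0)` is supported on a Borel set `D`, `f` is bounded measurable, and each
`mubar ∈ D` admits `μ` and `γ ∈ (0,1)` with `γμ ≤ μ0` such that
`ŵ(λμ + (1−λ)mubar) > f(mubar)` for all sufficiently small `λ ∈ (0,1]`,
then `ŵ(μ0) ≥ ∫ f dp`. -/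
theorem wHat_ge_integral_of_prior_perturbation
    {A Θ : Type*}
    [TopologicalSpace A] [CompactSpace A] [TopologicalSpace.MetrizableSpace A] [Nonempty A]
    [MeasurableSpace A] [BorelSpace A]
    [TopologicalSpace Θ] [CompactSpace Θ] [TopologicalSpace.MetrizableSpace Θ] [Nonempty Θ]
    [MeasurableSpace Θ] [BorelSpace Θ]
    (uS uR : A → Θ → ℝ)
    (hS : Continuous fun p : A × Θ => uS p.1 p.2)
    (hR : Continuous fun p : A × Θ => uR p.1 p.2)
    (μ0 : ProbabilityMeasure Θ)
    (D : Set (ProbabilityMeasure Θ)) (hDm : MeasurableSet D)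
    (p : ProbabilityMeasure (ProbabilityMeasure Θ)) (hp : p ∈ infoPolicies μ0)
    (hpD : (p : Measure (ProbabilityMeasure Θ)) D = 1)
    (f : ProbabilityMeasure Θ → ℝ) (hfm : Measurable f) (hfb : ∃ C : ℝ, ∀ μ, |f μ| ≤ C)
    (h : ∀ mubar ∈ D, ∃ (μ : ProbabilityMeasure Θ) (γ : ℝ), 0 < γ ∧ γ < 1 ∧
      scaledLE γ μ μ0 ∧
      ∃ lam0 : ℝ, 0 < lam0 ∧ lam0 ≤ 1 ∧ ∀ lam : ℝ, 0 < lam → lam ≤ lam0 →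
        ∀ ν : ProbabilityMeasure Θ,
          (ν : Measure Θ) = ENNReal.ofReal lam • (μ : Measure Θ) +
            ENNReal.ofReal (1 - lam) • (mubar : Measure Θ) →
          f mubar < wHat uS uR ν) :
    ∫ ν, f ν ∂(p : Measure (ProbabilityMeasure Θ)) ≤ wHat uS uR μ0 := by
  obtain ⟨C, hC⟩ := hfb
  refine wHat_ge_integral_of_prior_perturbation_general hS hR hp
    (.of_bound hfm.aestronglyMeasurable C (.of_forall hC)) ?_
  filter_upwards [(prob_compl_eq_zero_iff hDm).2 hpD] with x hx ε hε
  obtain ⟨μ, γ, hγ, -, hμ, lam0, hlam0, hlam1, hlt⟩ := h x hx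
  obtain ⟨lam, hlam, hle, ν, hν, hνle⟩ := exists_mixture_le_add_smul hγ hμ x hε hlam0 hlam1
  exact ⟨ν, hνle, (hlt lam hlam hle ν hν).le⟩
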